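/- For a tuple $a=(a_1,\dots,a_k)$ of positive integers let $$P_A(a)=\prod_{1\le i<j\le k+1}\frac{a_i+a_{i+1}+\cdots+a_{j-1}}{j-i},$$ the dimension of the irreducible representation of $\mathrm{SL}_{k+1}(\mathbb{C})$ with highest weight $\sum_i (a_i-1)\omega_i$, where $\omega_1,\dots,\omega_k$ are the fundamental weights; call $a$ nontrivial if some $a_i\ge 2$. Let $N$ be a positive integer and let $k\ge 7$ be an integer with $k^2\ge N$. Then there are at most $7$ tuples $a$ of positive integers of length $k$ with $P_A(a)\le N$, and fewer than $7$ of them are nontrivial. -/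

import Mathlib

/-- The Weyl dimension of the irreducible representation of `SL_{k+1}(ℂ)` indexed by a tuple
`a` of length `k`, written with 0-based indices: the product over `0 ≤ i < j ≤ k` of
`(a_i + ⋯ + a_{j-1}) / (j - i)`. The index `t` below always satisfies `t < k`. -/
def PA (k : ℕ) (a : Fin k → ℕ) : ℚ :=
  ∏ i ∈ Finset.range (k + 1), ∏ j ∈ Finset.range (k + 1),
    if i < j then
      ((∑ t ∈ Finset.Ico i j, if h : t < k then (a ⟨t, h⟩ : ℚ) else 0) / ((j : ℚ) - (i : ℚ)))
    else 1

/-! Dropping the first entry of a tuple removes from the Weyl product the row of factors with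
`i = 0`, so lower bounds on dimensions follow by induction on the length. If
`c = ∑_{t ≤ m} (a_t - 1)`, then for `j ≥ m` the sum `a_0 + ⋯ + a_j` is at least `j + 1 + c`, and
the resulting bound on the row telescopes to a quotient of binomial coefficients.

For `k ≥ 7` this gives dimension greater than `k²` whenever two entries exceed `1`, an entry
exceeds `1` at distance at least `2` from both ends, an end entry is at least `4`, or an entry
next to an end is at least `3`. The duality symmetry `a ↦ (a_{k-1}, …, a_0)` halves the work. What
survives, besides the trivial tuple, are the weights `ω₁`, `2ω₁`, `ω₂` and their duals. -/

open Finset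

section Choose

lemma cast_choose_three (K : Type*) [Field K] [CharZero K] (n : ℕ) :
    (n.choose 3 : K) = n * (n - 1) * (n - 2) / 6 := by
  cases n with
  | zero => simp
  | succ n =>
    have h : ((n : K) + 1) * n.choose 2 = (n + 1).choose 3 * 3 := by
      exact_mod_cast Nat.add_one_mul_choose_eq n 2
    rw [eq_div_of_mul_eq three_ne_zero h.symm, Nat.cast_choose_two]
    push_cast
    ring

lemma choose_le_choose_of_add_le {n r s : ℕ} (hrs : r ≤ s) (hsn : s + r ≤ n) :
    n.choose r ≤ n.choose s := by
  have le_of_le_half {t : ℕ} (hrt : r ≤ t) (htn : 2 * t ≤ n) : n.choose r ≤ n.choose t := by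
    induction t, hrt using Nat.le_induction with
    | base => exact le_rfl
    | succ t _ ih => exact (ih (by omega)).trans (Nat.choose_le_succ_of_lt_half_left (by omega))
  rcases le_total (2 * s) n with h | h
  · exact le_of_le_half hrs h
  · rw [← Nat.choose_symm (show s ≤ n by omega)]
    exact le_of_le_half (by omega) (by omega)

end Choose

section Weyl

/-- The factor `(x_i + ⋯ + x_{j-1}) / (j - i)` of the Weyl dimension formula, for a tuple
continued to an infinite sequence so that it can be shifted without changing its type. -/
def weylFactor (x : ℕ → ℕ) (i j : ℕ) : ℚ :=
  ((∑ t ∈ Ico i j, x t : ℕ) : ℚ) / ((j : ℚ) - (i : ℚ))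

/-- The Weyl dimension `P_A` of the first `k` entries of a sequence. -/
def weylDim (k : ℕ) (x : ℕ → ℕ) : ℚ :=
  ∏ i ∈ range (k + 1), ∏ j ∈ range (k + 1), if i < j then weylFactor x i j else 1

/-- The first row of the Weyl dimension formula: the product of its factors with `i = 0`. -/
def weylRow (k : ℕ) (x : ℕ → ℕ) : ℚ :=
  ∏ j ∈ range k, weylFactor x 0 (j + 1)

variable {k : ℕ} {x : ℕ → ℕ}

lemma weylFactor_shift (x : ℕ → ℕ) (i j : ℕ) :
    weylFactor (fun t => x (t + 1)) i j = weylFactor x (i + 1) (j + 1) := by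
  simp [weylFactor, sum_Ico_add']

lemma weylDim_zero (x : ℕ → ℕ) : weylDim 0 x = 1 := by
  simp [weylDim]

lemma weylDim_succ (k : ℕ) (x : ℕ → ℕ) :
    weylDim (k + 1) x = weylRow (k + 1) x * weylDim k fun t => x (t + 1) := by
  simp [weylDim, weylRow, weylFactor_shift, prod_range_succ' _ (k + 1), mul_comm]

lemma weylFactor_reverse {i j : ℕ} (x : ℕ → ℕ) (hij : i < j) (hjk : j ≤ k) :
    weylFactor (fun t => x (k - 1 - t)) i j = weylFactor x (k - j) (k - i) := by
  have hsum := sum_Ico_reflect x i (show j ≤ k - 1 + 1 by omega)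
  rw [Nat.sub_add_cancel (by omega)] at hsum
  rw [weylFactor, weylFactor, hsum, Nat.cast_sub hjk, Nat.cast_sub (hij.le.trans hjk),
    sub_sub_sub_cancel_left]

lemma weylDim_reverse (k : ℕ) (x : ℕ → ℕ) :
    weylDim k (fun t => x (k - 1 - t)) = weylDim k x := by
  unfold weylDim
  symm
  rw [prod_comm, ← prod_range_reflect]
  refine prod_congr rfl fun i hi => ?_
  rw [← prod_range_reflect]
  refine prod_congr rfl fun j hj => ?_
  rw [mem_range] at hi hj
  by_cases hij : i < j
  · rw [if_pos (by omega), if_pos hij, weylFactor_reverse x hij (by omega)]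
    rfl
  · rw [if_neg (by omega), if_neg hij]

end Weyl

section LowerBounds

variable {k : ℕ} {x : ℕ → ℕ}

lemma add_le_sum_range (hx : ∀ t, 1 ≤ x t) {n m c : ℕ} (hn : n + c ≤ ∑ t ∈ range n, x t)
    (hnm : n ≤ m) : m + c ≤ ∑ t ∈ range m, x t := by
  induction m, hnm using Nat.le_induction with
  | base => exact hn
  | succ m _ ih =>
    rw [sum_range_succ]
    linarith [hx m]

lemma add_le_sum_range_succ (hx : ∀ t, 1 ≤ x t) {m c : ℕ} (hm : c + 1 ≤ x m) :
    m + 1 + c ≤ ∑ t ∈ range (m + 1), x t := by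
  have hsum := add_le_sum_range hx (n := 0) (c := 0) (by simp) m.zero_le
  rw [sum_range_succ]
  omega

/-- Each factor is at least `(j + 1 + c) / (j + 1)`, and the product of these telescopes. -/
lemma choose_le_choose_mul_prod_weylFactor (hx : ∀ t, 1 ≤ x t) {m n c : ℕ} (hmn : m ≤ n)
    (hm : m + 1 + c ≤ ∑ t ∈ range (m + 1), x t) :
    ((n + c).choose c : ℚ) ≤ (m + c).choose c * ∏ j ∈ Ico m n, weylFactor x 0 (j + 1) := by
  induction n, hmn using Nat.le_induction with
  | base => simp
  | succ n hmn ih =>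
    have hfactor : ((n : ℚ) + 1 + c) / (n + 1) ≤ weylFactor x 0 (n + 1) := by
      rw [weylFactor, ← range_eq_Ico, Nat.cast_succ, Nat.cast_zero, sub_zero]
      gcongr
      exact_mod_cast add_le_sum_range hx hm (show m + 1 ≤ n + 1 by omega)
    have hchoose : ((n + c).choose c : ℚ) * (n + 1 + c) = (n + 1 + c).choose c * (n + 1) := by
      have h := Nat.choose_mul_succ_eq (n + c) c
      rw [show n + c + 1 = n + 1 + c by omega, Nat.add_sub_cancel] at h
      exact_mod_cast h
    calc ((n + 1 + c).choose c : ℚ)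
        = (n + c).choose c * ((n + 1 + c) / (n + 1)) := by
          rw [← mul_div_assoc, hchoose, mul_div_cancel_right₀ _ (by positivity)]
      _ ≤ (m + c).choose c * (∏ j ∈ Ico m n, weylFactor x 0 (j + 1)) *
            weylFactor x 0 (n + 1) :=
          mul_le_mul ih hfactor (by positivity) (le_trans (by positivity) ih)
      _ = (m + c).choose c * ∏ j ∈ Ico m (n + 1), weylFactor x 0 (j + 1) := by
          rw [prod_Ico_succ_top hmn, mul_assoc]

lemma one_le_prod_weylFactor (hx : ∀ t, 1 ≤ x t) {m n : ℕ} (hmn : m ≤ n) :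
    1 ≤ ∏ j ∈ Ico m n, weylFactor x 0 (j + 1) := by
  simpa using choose_le_choose_mul_prod_weylFactor hx hmn
    (add_le_sum_range_succ hx (c := 0) (hx m))

lemma weylRow_eq_mul {m : ℕ} (hmk : m ≤ k) (x : ℕ → ℕ) :
    weylRow k x =
      (∏ j ∈ Ico 0 m, weylFactor x 0 (j + 1)) * ∏ j ∈ Ico m k, weylFactor x 0 (j + 1) := by
  rw [weylRow, range_eq_Ico, prod_Ico_consecutive _ m.zero_le hmk]

lemma one_le_weylRow (hx : ∀ t, 1 ≤ x t) : 1 ≤ weylRow k x := by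
  simpa [weylRow] using one_le_prod_weylFactor hx k.zero_le

lemma choose_le_choose_mul_weylRow (hx : ∀ t, 1 ≤ x t) {m c : ℕ} (hmk : m ≤ k)
    (hm : c + 1 ≤ x m) : ((k + c).choose c : ℚ) ≤ (m + c).choose c * weylRow k x := by
  have hright := choose_le_choose_mul_prod_weylFactor hx hmk (add_le_sum_range_succ hx hm)
  have hleft := one_le_prod_weylFactor hx m.zero_le
  calc ((k + c).choose c : ℚ)
      ≤ (m + c).choose c * ∏ j ∈ Ico m k, weylFactor x 0 (j + 1) := hright
    _ ≤ (m + c).choose c * weylRow k x := by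
      rw [weylRow_eq_mul hmk]
      gcongr
      exact le_mul_of_one_le_left (zero_le_one.trans (one_le_prod_weylFactor hx hmk)) hleft

lemma succ_mul_succ_le_mul_weylRow (hx : ∀ t, 1 ≤ x t) {m : ℕ} (hm0 : 0 < m) (hmk : m ≤ k)
    (h0 : 2 ≤ x 0) (hm : 2 ≤ x m) : ((k : ℚ) + 1) * (k + 2) ≤ (m + 2) * weylRow k x := by
  have hleft := choose_le_choose_mul_prod_weylFactor hx m.zero_le
    (add_le_sum_range_succ hx (c := 1) h0)
  have hsum : m + 1 + 2 ≤ ∑ t ∈ range (m + 1), x t := by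
    have := add_le_sum_range hx (add_le_sum_range_succ hx (c := 1) h0) (show 0 + 1 ≤ m from hm0)
    rw [sum_range_succ]
    omega
  have hright := choose_le_choose_mul_prod_weylFactor hx hmk hsum
  have hright_one_le := one_le_prod_weylFactor hx hmk
  rw [Nat.cast_choose_two, Nat.cast_choose_two] at hright
  rw [weylRow_eq_mul hmk]
  push_cast [Nat.choose_one_right] at hleft hright
  set L := ∏ j ∈ Ico 0 m, weylFactor x 0 (j + 1)
  set R := ∏ j ∈ Ico m k, weylFactor x 0 (j + 1)
  calc ((k : ℚ) + 1) * (k + 2) ≤ (m + 2) * ((m + 1) * R) := by linarith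
    _ ≤ (m + 2) * (L * R) := by
      gcongr
      linarith

lemma one_le_weylDim (hx : ∀ t, 1 ≤ x t) : 1 ≤ weylDim k x := by
  induction k generalizing x with
  | zero => rw [weylDim_zero]
  | succ k ih =>
    rw [weylDim_succ]
    exact one_le_mul_of_one_le_of_one_le (one_le_weylRow hx) (ih fun t => hx (t + 1))

lemma weylDim_shift_le (hx : ∀ t, 1 ≤ x t) :
    (weylDim k fun t => x (t + 1)) ≤ weylDim (k + 1) x := by
  rw [weylDim_succ]
  exact le_mul_of_one_le_left (zero_le_one.trans (one_le_weylDim fun t => hx (t + 1)))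
    (one_le_weylRow hx)

lemma weylRow_le_weylDim (hx : ∀ t, 1 ≤ x t) : weylRow k x ≤ weylDim k x := by
  cases k with
  | zero => simp [weylRow, weylDim_zero]
  | succ k =>
    rw [weylDim_succ]
    exact le_mul_of_one_le_right (zero_le_one.trans (one_le_weylRow hx))
      (one_le_weylDim fun t => hx (t + 1))

/-- The binomial coefficient is `dim Sym^c(ℂ^{k+1})`. -/
lemma choose_le_weylDim_of_le_apply_zero (hx : ∀ t, 1 ≤ x t) {c : ℕ} (h0 : c + 1 ≤ x 0) :
    ((k + c).choose c : ℚ) ≤ weylDim k x :=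
  le_trans (by simpa using choose_le_choose_mul_weylRow hx k.zero_le h0) (weylRow_le_weylDim hx)

/-- The binomial coefficient is `dim Λ^{m+1}(ℂ^{k+1})`. -/
lemma choose_le_weylDim_of_two_le (hx : ∀ t, 1 ≤ x t) {m : ℕ} (hmk : m < k) (hm : 2 ≤ x m) :
    ((k + 1).choose (m + 1) : ℚ) ≤ weylDim k x := by
  induction m generalizing k x with
  | zero => simpa using choose_le_weylDim_of_le_apply_zero hx (c := 1) hm
  | succ m ih =>
    obtain ⟨k, rfl⟩ : ∃ l, k = l + 1 := ⟨k - 1, by omega⟩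
    have hshift := ih (fun t => hx (t + 1)) (show m < k by omega) hm
    have hrow := choose_le_choose_mul_weylRow hx (c := 1) hmk.le hm
    have hchoose : ((k : ℚ) + 2) * (k + 1).choose (m + 1) =
        (k + 2).choose (m + 2) * (m + 2) := by
      exact_mod_cast Nat.add_one_mul_choose_eq (k + 1) (m + 1)
    push_cast [Nat.choose_one_right] at hrow
    rw [weylDim_succ]
    refine le_of_mul_le_mul_right ?_ (show (0 : ℚ) < m + 2 by positivity)
    calc ((k + 1 + 1).choose (m + 1 + 1) : ℚ) * (m + 2)
        = (k + 2) * (k + 1).choose (m + 1) := hchoose.symm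
      _ ≤ ((m + 2) * weylRow (k + 1) x) * weylDim k fun t => x (t + 1) :=
        mul_le_mul (by linarith) hshift (by positivity) (by linarith)
      _ = weylRow (k + 1) x * (weylDim k fun t => x (t + 1)) * (m + 2) := by ring

lemma mul_choose_le_mul_weylDim_of_two_le (hx : ∀ t, 1 ≤ x t) {m : ℕ} (hm0 : 0 < m) (hmk : m < k)
    (h0 : 2 ≤ x 0) (hm : 2 ≤ x m) :
    ((k : ℚ) + 1) * (k + 2) * k.choose m ≤ (m + 2) * weylDim k x := by
  obtain ⟨k, rfl⟩ : ∃ l, k = l + 1 := ⟨k - 1, by omega⟩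
  obtain ⟨m, rfl⟩ : ∃ l, m = l + 1 := ⟨m - 1, by omega⟩
  have hrow := succ_mul_succ_le_mul_weylRow hx hm0 hmk.le h0 hm
  have hshift := choose_le_weylDim_of_two_le (k := k) (fun t => hx (t + 1)) (by omega) hm
  rw [weylDim_succ, ← mul_assoc]
  exact mul_le_mul hrow hshift (by positivity) (le_trans (by positivity) hrow)

end LowerBounds

section SquareBounds

variable {k : ℕ} {x : ℕ → ℕ}

lemma sq_lt_weylDim_of_four_le_zero (hx : ∀ t, 1 ≤ x t) (h0 : 4 ≤ x 0) :
    (k : ℚ) ^ 2 < weylDim k x := by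
  refine lt_of_lt_of_le ?_ (choose_le_weylDim_of_le_apply_zero hx (c := 3) h0)
  rw [cast_choose_three]
  push_cast
  have hk : (0 : ℚ) ≤ k := k.cast_nonneg
  nlinarith [pow_nonneg hk 3]

lemma sq_lt_weylDim_of_three_le_one (hx : ∀ t, 1 ≤ x t) (hk : 2 ≤ k) (h1 : 3 ≤ x 1) :
    (k : ℚ) ^ 2 < weylDim k x := by
  obtain ⟨k, rfl⟩ : ∃ l, k = l + 1 := ⟨k - 1, by omega⟩
  have hrow : ((k : ℚ) + 3) * (k + 2) / 6 ≤ weylRow (k + 1) x := by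
    have h := choose_le_choose_mul_weylRow hx (show 1 ≤ k + 1 by omega) h1
    rw [Nat.cast_choose_two, Nat.cast_choose_two] at h
    push_cast at h
    linarith
  have hshift : ((k : ℚ) + 2) * (k + 1) / 2 ≤ weylDim k fun t => x (t + 1) := by
    have h := choose_le_weylDim_of_le_apply_zero (k := k) (fun t => hx (t + 1)) h1
    rw [Nat.cast_choose_two] at h
    push_cast at h
    linarith
  rw [weylDim_succ]
  refine lt_of_lt_of_le ?_ (mul_le_mul hrow hshift (by positivity) (le_trans (by positivity) hrow))
  push_cast
  have hk1 : (0 : ℚ) < k := by exact_mod_cast (show 0 < k by omega)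
  have hpoly : 12 * ((k : ℚ) + 1) < (k + 3) * (k + 2) ^ 2 := by nlinarith [pow_pos hk1 3]
  nlinarith

lemma sq_lt_weylDim_of_two_le_middle (hx : ∀ t, 1 ≤ x t) (hk : 7 ≤ k) {m : ℕ} (hm2 : 2 ≤ m)
    (hmk : m + 3 ≤ k) (hm : 2 ≤ x m) : (k : ℚ) ^ 2 < weylDim k x := by
  have hk' : (7 : ℚ) ≤ k := by exact_mod_cast hk
  calc (k : ℚ) ^ 2 < (k + 1).choose 3 := by
        rw [cast_choose_three]
        push_cast
        nlinarith
    _ ≤ (k + 1).choose (m + 1) := by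
        exact_mod_cast choose_le_choose_of_add_le (by omega) (by omega)
    _ ≤ weylDim k x := choose_le_weylDim_of_two_le hx (by omega) hm

lemma sq_lt_weylDim_of_two_le_zero_of_two_le (hx : ∀ t, 1 ≤ x t) {m : ℕ} (hm0 : 0 < m)
    (hmk : m < k) (h0 : 2 ≤ x 0) (hm : 2 ≤ x m) : (k : ℚ) ^ 2 < weylDim k x := by
  have hdim := mul_choose_le_mul_weylDim_of_two_le hx hm0 hmk h0 hm
  have hchoose : (k : ℚ) ≤ k.choose m := by
    exact_mod_cast k.choose_one_right ▸ choose_le_choose_of_add_le (r := 1) hm0 hmk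
  have hmk' : (m : ℚ) + 1 ≤ k := by exact_mod_cast hmk
  have hk : (0 : ℚ) < k := by linarith [m.cast_nonneg (α := ℚ)]
  refine lt_of_mul_lt_mul_left ?_ (show (0 : ℚ) ≤ k + 1 by positivity)
  calc ((k : ℚ) + 1) * k ^ 2 < (k + 1) * (k + 2) * k := by nlinarith
    _ ≤ (k + 1) * (k + 2) * k.choose m := by gcongr
    _ ≤ (m + 2) * weylDim k x := hdim
    _ ≤ (k + 1) * weylDim k x := by
        refine mul_le_mul_of_nonneg_right (by linarith) ?_
        exact zero_le_one.trans (one_le_weylDim hx)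

lemma sq_lt_weylDim_of_two_le_one_of_two_le_sub_two (hx : ∀ t, 1 ≤ x t) (hk : 4 ≤ k)
    (h1 : 2 ≤ x 1) (hlast : 2 ≤ x (k - 2)) : (k : ℚ) ^ 2 < weylDim k x := by
  obtain ⟨n, rfl⟩ : ∃ n, k = n + 3 := ⟨k - 3, by omega⟩
  have hn : (1 : ℚ) ≤ n := by exact_mod_cast (show 1 ≤ n by omega)
  have hshift := mul_choose_le_mul_weylDim_of_two_le (k := n + 2) (m := n)
    (fun t => hx (t + 1)) (by omega) (by omega) h1 hlast
  rw [Nat.choose_symm_add, Nat.cast_choose_two] at hshift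
  have hle := weylDim_shift_le hx (k := n + 2)
  refine lt_of_lt_of_le ?_ hle
  push_cast at hshift ⊢
  refine lt_of_mul_lt_mul_left (lt_of_lt_of_le ?_ hshift) (show (0 : ℚ) ≤ n + 2 by positivity)
  nlinarith [mul_nonneg (sub_nonneg.2 hn) (sub_nonneg.2 hn)]

lemma sq_lt_weylDim_of_two_le_of_two_le (hx : ∀ t, 1 ≤ x t) (hk : 7 ≤ k) {p m : ℕ} (hpm : p < m)
    (hmk : m < k) (hp : 2 ≤ x p) (hm : 2 ≤ x m) : (k : ℚ) ^ 2 < weylDim k x := by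
  rcases (by omega : p = 0 ∨ m = k - 1 ∨ 2 ≤ p ∧ p + 3 ≤ k ∨ 2 ≤ m ∧ m + 3 ≤ k ∨
    p = 1 ∧ m = k - 2) with rfl | rfl | ⟨hp2, hpk⟩ | ⟨hm2, hmk⟩ | ⟨rfl, rfl⟩
  · exact sq_lt_weylDim_of_two_le_zero_of_two_le hx hpm hmk hp hm
  · rw [← weylDim_reverse]
    refine sq_lt_weylDim_of_two_le_zero_of_two_le (m := k - 1 - p) (fun t => hx _) (by omega)
      (by omega) hm ?_
    rwa [Nat.sub_sub_self (by omega)]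
  · exact sq_lt_weylDim_of_two_le_middle hx hk hp2 hpk hp
  · exact sq_lt_weylDim_of_two_le_middle hx hk hm2 hmk hm
  · exact sq_lt_weylDim_of_two_le_one_of_two_le_sub_two hx (by omega) hp hm

end SquareBounds

section Classification

/-- The possible nontrivial tuples, as pairs `(m, c)` of a 0-based position and the entry there,
all other entries being `1`; the weights are `ω₁, 2ω₁, ω₂` and their duals. -/
def smallSpikes (k : ℕ) : Finset (ℕ × ℕ) :=
  {(0, 2), (0, 3), (1, 2), (k - 2, 2), (k - 1, 2), (k - 1, 3)}

/-- The tuple of length `k` with entry `w.2` at position `w.1` and ones elsewhere. -/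
def spikeTuple (k : ℕ) (w : ℕ × ℕ) : Fin k → ℕ :=
  fun i => if i = w.1 then w.2 else 1

/-- The continuation of a tuple by ones. -/
def extendOne {k : ℕ} (a : Fin k → ℕ) (t : ℕ) : ℕ :=
  if h : t < k then a ⟨t, h⟩ else 1

variable {k : ℕ}

lemma extendOne_apply (a : Fin k → ℕ) (i : Fin k) : extendOne a i = a i := by
  simp [extendOne]

lemma one_le_extendOne {a : Fin k → ℕ} (ha : ∀ i, 1 ≤ a i) (t : ℕ) : 1 ≤ extendOne a t := by
  unfold extendOne
  split_ifs
  exacts [ha _, le_rfl]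

lemma PA_eq_weylDim (a : Fin k → ℕ) : PA k a = weylDim k (extendOne a) := by
  refine prod_congr rfl fun i _ => prod_congr rfl fun j hj => ?_
  rw [weylFactor, Nat.cast_sum]
  congr 2
  refine sum_congr rfl fun t ht => ?_
  have htk : t < k := by
    rw [mem_range] at hj
    rw [mem_Ico] at ht
    omega
  simp [extendOne, htk]

lemma mem_smallSpikes_of_weylDim_le {x : ℕ → ℕ} (hx : ∀ t, 1 ≤ x t) (hk : 7 ≤ k)
    (hdim : weylDim k x ≤ (k : ℚ) ^ 2) {m : ℕ} (hmk : m < k) (hm : 2 ≤ x m) :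
    (m, x m) ∈ smallSpikes k := by
  have hdim' : weylDim k (fun t => x (k - 1 - t)) ≤ (k : ℚ) ^ 2 := by rwa [weylDim_reverse]
  have hfirst : x 0 < 4 := by
    contrapose! hdim
    exact sq_lt_weylDim_of_four_le_zero hx hdim
  have hsecond : x 1 < 3 := by
    contrapose! hdim
    exact sq_lt_weylDim_of_three_le_one hx (by omega) hdim
  have hlast : x (k - 1) < 4 := by
    contrapose! hdim'
    exact sq_lt_weylDim_of_four_le_zero (fun t => hx _) hdim'
  have hpenultimate : x (k - 2) < 3 := by
    contrapose! hdim'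
    exact sq_lt_weylDim_of_three_le_one (fun t => hx _) (by omega) hdim'
  have hends : ¬ (2 ≤ m ∧ m + 3 ≤ k) := fun h =>
    hdim.not_gt (sq_lt_weylDim_of_two_le_middle hx hk h.1 h.2 hm)
  rcases (by omega : m = 0 ∨ m = 1 ∨ m = k - 2 ∨ m = k - 1) with rfl | rfl | rfl | rfl <;>
    grind [smallSpikes]

lemma exists_spikeTuple_eq {a : Fin k → ℕ} (ha : ∀ i, 1 ≤ a i) (hk : 7 ≤ k)
    (hdim : PA k a ≤ (k : ℚ) ^ 2) {m : Fin k} (hm : 2 ≤ a m) :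
    ∃ w ∈ smallSpikes k, spikeTuple k w = a := by
  have hx := one_le_extendOne ha
  rw [PA_eq_weylDim] at hdim
  rw [← extendOne_apply a] at hm
  refine ⟨(m, a m), ?_, funext fun i => ?_⟩
  · rw [← extendOne_apply a]
    exact mem_smallSpikes_of_weylDim_le hx hk hdim m.2 hm
  · by_cases him : i = m
    · simp [spikeTuple, him]
    · have hi : ¬ 2 ≤ extendOne a i := fun hi => hdim.not_gt <| by
        rcases lt_or_gt_of_ne him with h | h
        · exact sq_lt_weylDim_of_two_le_of_two_le hx hk h m.2 hi hm
        · exact sq_lt_weylDim_of_two_le_of_two_le hx hk h i.2 hm hi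
      rw [extendOne_apply] at hi
      have := ha i
      simp only [spikeTuple, Fin.val_inj, him, if_false]
      omega

end Classification

/-- If `k ≥ 7` and `k² ≥ N ≥ 1`, then at most `7` tuples of `k` positive integers have
`PA ≤ N`, and fewer than `7` of them are nontrivial. -/
theorem pa_long_tuples_le_seven (N k : ℕ) (hN : 0 < N) (hk7 : 7 ≤ k) (hk : N ≤ k ^ 2) :
    {a : Fin k → ℕ | (∀ i, 1 ≤ a i) ∧ PA k a ≤ (N : ℚ)}.Finite ∧
    {a : Fin k → ℕ | (∀ i, 1 ≤ a i) ∧ PA k a ≤ (N : ℚ)}.ncard ≤ 7 ∧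
    {a : Fin k → ℕ | (∀ i, 1 ≤ a i) ∧ (∃ i, 2 ≤ a i) ∧ PA k a ≤ (N : ℚ)}.ncard < 7 := by
  set nontrivial := {a : Fin k → ℕ | (∀ i, 1 ≤ a i) ∧ (∃ i, 2 ≤ a i) ∧ PA k a ≤ (N : ℚ)}
  have hspikes : nontrivial ⊆ (smallSpikes k).image (spikeTuple k) := by
    rintro a ⟨ha, ⟨m, hm⟩, hdim⟩
    rw [mem_coe, mem_image]
    exact exists_spikeTuple_eq ha hk7 (hdim.trans (by exact_mod_cast hk)) hm
  have hfin : nontrivial.Finite := (finite_toSet _).subset hspikes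
  have hcard : nontrivial.ncard ≤ 6 := calc
    nontrivial.ncard ≤ ((smallSpikes k).image (spikeTuple k)).card := by
      rw [← Set.ncard_coe_finset]
      exact Set.ncard_le_ncard hspikes
    _ ≤ 6 := card_image_le.trans card_le_six
  have hall : {a : Fin k → ℕ | (∀ i, 1 ≤ a i) ∧ PA k a ≤ (N : ℚ)} ⊆ insert 1 nontrivial := by
    rintro a ⟨ha, hdim⟩
    by_cases hm : ∃ m, 2 ≤ a m
    · exact .inr ⟨ha, hm, hdim⟩
    · push Not at hm
      exact .inl (funext fun i => le_antisymm (Nat.lt_succ_iff.1 (hm i)) (ha i))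
  refine ⟨(hfin.insert 1).subset hall, ?_, Nat.lt_succ_iff.2 hcard⟩
  exact (Set.ncard_le_ncard hall (hfin.insert 1)).trans
    ((Set.ncard_insert_le 1 nontrivial).trans (Nat.succ_le_succ hcard))
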